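/- Let n ≥ 1 and k ∈ {1, …, n}, and let (B_1, …, B_n) be the tuple consisting of k copies of C_{1,…,1,2,…,2} (with k−1 entries equal to 1 followed by n−k+1 entries equal to 2) and n−k copies of C_{1,…,1}. Then this tuple is minimal with mixed volume 2: MV(B_1, …, B_n) = 2, and for every i ∈ {1, …, n} and every lattice point δ ∈ (ℤ^n ∩ C) \ B_i, replacing B_i by convexHull(B_i ∪ {δ}) yields a tuple of relative mixed volume strictly less than 2. -/

import Mathlib

/-!
The mixed volume is computed one coordinate at a time.

**Transport description.** A point `x` lies in `∑ i, s i • C_{b i}` iff there are masses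
`l i c ≥ 0` with `∑ c, l i c ≥ s i` and `∑ i, l i c * b i c ≤ x c`: demand `i` is served through
coordinate `c` at price `b i c`, within the budget `x c`. The set of such `x` is `Reg b s`, and
`covol b s` is the volume of its complement in the orthant; it makes sense for all real weights
`s ≥ 0`. By definition `MV` is the mixed difference `Dif univ (covol b) 0` of this function.

**Slicing.** Call `i` *first* for `j` if `b j d / b i d ≤ b j last / b i last` for all `d`, that is,
if serving `i` through the last coordinate is comparatively cheapest. If `i` is first for every
other demand in the support of `s`, an exchange argument (`exchange`) shows that nothing is lost by
spending the last coordinate on `i` before anything else. Hence (`slice_low`, `slice_high`) the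
slices of the complement below height `b i last * σ` are `n`-dimensional complements of the same
kind, while above that height one sees a translate of the complement for `s`. By Fubini (`peel`),
`covol b (s + σ e_i) = b i last * ∫ τ in 0..σ, covol (low b) (s + τ e_i) + covol b s`.

**Differences.** Consequently a mixed difference over `T` in dimension `n + 1` with `#T = n + 1`
equals `b i last` times the mixed difference over `T \ {i}` in dimension `n`, provided `i ∈ T` is
first in `T`; differences over more indices than the dimension vanish (`HasDif.step`,
`HasDif.vanish`, `HasDif.peel`). A first index exists as soon as the vectors `b i` are totally
ordered with entries in `{1, 2}` (`chain_of_le`), which holds for all families used here.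

**Values.** The copies of `C_{1,…,1}` are first in a coordinate priced `2` by all other vectors, so they
absorb such coordinates with factor `1`. When they are used up, `k` copies of
`C_{1,…,1,2}` remain in dimension `k`; the last coordinate contributes the factor `2` and all the
others contribute `1`. This gives mixed volume `2` (`HasDif.two`).

**Minimality.** A lattice point `δ` of the orthant outside `C_a`, `a ∈ {1, 2}^n`, is either `0` or a
basis vector `e_j` with `a j = 2` (`lattice_points`). Adding `0` replaces `B i` by the whole
orthant, and the terms of `MV` for `I` and `I ∪ {i}` cancel, so that `MV = 0`. Adding `e_j` changes
the entry `a j` to `1` (`hull_single`); this polyhedron then absorbs the coordinate `j` with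
factor `1`, and `MV = 1` (`HasDif.drop`).
-/

open Pointwise MeasureTheory

noncomputable section

/-- The positive (closed) orthant in `ℝ^n`. -/
def orthant (n : ℕ) : Set (Fin n → ℝ) := {x | ∀ i, 0 ≤ x i}

/-- The standard basis vector `e m`. -/
def stdVec {n : ℕ} (m : Fin n) : Fin n → ℝ := Pi.single m 1

/-- A lattice polyhedron: the Minkowski sum of the convex hull of a finite nonempty set of
points with nonnegative integer coordinates and the positive orthant. -/
def IsLatticePolyhedron {n : ℕ} (B : Set (Fin n → ℝ)) : Prop :=
  ∃ F : Finset (Fin n → ℝ), F.Nonempty ∧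
    (∀ p ∈ F, ∀ i, ∃ m : ℕ, p i = (m : ℝ)) ∧
    B = convexHull ℝ (↑F) + orthant n

/-- The relative mixed volume of the pairs `(C, B 1), …, (C, B n)`. -/
def MV {n : ℕ} (B : Fin n → Set (Fin n → ℝ)) : ℝ :=
  ∑ I ∈ Finset.univ.powerset.filter (fun I : Finset (Fin n) => I.Nonempty),
    (-1 : ℝ) ^ (n - I.card) * (volume (orthant n \ ∑ i ∈ I, B i)).toReal

/-- The polyhedron `C_{a_1,…,a_n} = conv({a_1 e_1, …, a_n e_n}) + C`. -/
def Caf {n : ℕ} (a : Fin n → ℝ) : Set (Fin n → ℝ) :=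
  convexHull ℝ (Set.range fun i : Fin n => Pi.single i (a i)) + orthant n

/-- A tuple of polyhedra is minimal with mixed volume `V`. -/
def IsMinimalTuple {n : ℕ} (B : Fin n → Set (Fin n → ℝ)) (V : ℝ) : Prop :=
  MV B = V ∧ ∀ i : Fin n, ∀ δ : Fin n → ℝ,
    (∀ j, ∃ m : ℤ, δ j = (m : ℝ)) → δ ∈ orthant n → δ ∉ B i →
    MV (Function.update B i (convexHull ℝ (B i ∪ {δ}))) < V


/-! ### Transport plans and slices -/

set_option linter.unusedSectionVars false

variable {ι : Type*} [Fintype ι] [DecidableEq ι]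

/-- `l` is a transport plan for the demands `s`, prices `b` and budgets `x`: the mass `l i c` of
demand `i` served through coordinate `c` costs `b i c` per unit. -/
structure Feas {n : ℕ} (b : ι → Fin n → ℝ) (s : ι → ℝ) (x : Fin n → ℝ)
    (l : ι → Fin n → ℝ) : Prop where
  nonneg : ∀ i c, 0 ≤ l i c
  total : ∀ i, s i ≤ ∑ c, l i c
  cost : ∀ c, ∑ i, l i c * b i c ≤ x c

/-- The points `x` admitting a transport plan. For `s ≥ 0` and `b > 0` this is the Minkowski sum of
the dilates `s i • C_{b i}`, with the orthant in place of `C_{b i}` when `s i = 0`. -/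
def Reg {n : ℕ} (b : ι → Fin n → ℝ) (s : ι → ℝ) : Set (Fin n → ℝ) := {x | ∃ l, Feas b s x l}

/-- The complement of `Reg b s` in the positive orthant. -/
def Comp {n : ℕ} (b : ι → Fin n → ℝ) (s : ι → ℝ) : Set (Fin n → ℝ) := orthant n \ Reg b s

/-- The covolume of `Reg b s`, as a real number. The complement has finite volume when `s ≥ 0`, see
`Comp_lt_top`. -/
def covol {n : ℕ} (b : ι → Fin n → ℝ) (s : ι → ℝ) : ℝ := (volume (Comp b s)).toReal

/-- If serving `i` through the last coordinate is comparatively cheapest, every plan can be changed so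
that `i` takes as much of the last coordinate as its demand `σ` and the budget allow. The demands `j`
that occupied the last coordinate are moved to the places which `i` leaves in the other coordinates,
and `hfirst` says that they fit there. -/
lemma exchange {n : ℕ} {b : ι → Fin (n + 1) → ℝ} (hb : ∀ i c, 0 < b i c) {s : ι → ℝ} {i : ι}
    (hfirst : ∀ j, s j ≠ 0 → ∀ d, b j d * b i (Fin.last n) ≤ b i d * b j (Fin.last n))
    (hsi : s i = 0) {σ : ℝ} {x : Fin (n + 1) → ℝ}
    {l : ι → Fin (n + 1) → ℝ} (hl : Feas b (s + Pi.single i σ) x l) :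
    ∃ l', Feas b (s + Pi.single i σ) x l' ∧
      min σ (x (Fin.last n) / b i (Fin.last n)) ≤ l' i (Fin.last n) := by
  set β := b i (Fin.last n) with hβ
  have hβ0 : 0 < β := hb _ _
  -- `g` is the target, `μ` the present share of `i`, and `η` the mass that `i` has to move.
  set g := min σ (x (Fin.last n) / β) with hg
  by_cases hμ : g ≤ l i (Fin.last n)
  · exact ⟨l, hl, hμ⟩
  push Not at hμ
  set μ := l i (Fin.last n) with hμdef
  set η := g - μ with hη
  have hη0 : 0 < η := by linarith
  set L := ∑ c : Fin n, l i c.castSucc with hL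
  have hLη : η ≤ L := by
    have h1 := hl.total i
    rw [Fin.sum_univ_castSucc] at h1
    simp only [Pi.add_apply, hsi, Pi.single_eq_same, zero_add] at h1
    have : g ≤ σ := min_le_left _ _
    linarith
  have hL0 : 0 < L := by linarith
  -- `q j` is the mass of the other demands in the last coordinate; demands with `s j = 0` are simply
  -- dropped from it. `M` is the mass of `i` with the same cost in the last coordinate.
  set q : ι → ℝ := fun j => if j = i then 0 else if s j = 0 then 0 else l j (Fin.last n) with hq
  have hq0 : ∀ j, 0 ≤ q j := by
    intro j; simp only [hq]; split_ifs <;> first | exact le_rfl | exact hl.nonneg _ _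
  have hqi : q i = 0 := by simp [hq]
  set M := (∑ j, q j * b j (Fin.last n)) / β with hM
  have hMβ : ∑ j, q j * b j (Fin.last n) = M * β := by rw [hM]; field_simp
  have hM0 : 0 ≤ M := div_nonneg (Finset.sum_nonneg fun j _ => mul_nonneg (hq0 j) (hb _ _).le) hβ0.le
  have hMμ : M * β + μ * β ≤ x (Fin.last n) := by
    refine le_trans ?_ (hl.cost (Fin.last n))
    rw [← hMβ]
    have : μ * β = ∑ j, if j = i then l j (Fin.last n) * b j (Fin.last n) else 0 := by
      simp [hμdef, hβ]
    rw [this, ← Finset.sum_add_distrib]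
    refine Finset.sum_le_sum fun j _ => ?_
    have h1 := mul_nonneg (hl.nonneg j (Fin.last n)) (hb j (Fin.last n)).le
    simp only [hq]
    split_ifs <;> simp [h1]
  have hgβ : g * β ≤ x (Fin.last n) := by
    have : g ≤ x (Fin.last n) / β := min_le_right _ _
    rwa [le_div_iff₀ hβ0] at this
  -- `θ` is the fraction of `q` that has to leave the last coordinate to make room for `g`.
  obtain ⟨θ, hθ0, hθ1, hθη, hθ⟩ : ∃ θ : ℝ, 0 ≤ θ ∧ θ ≤ 1 ∧ θ * M ≤ η ∧
      ((1 - θ) * M + g) * β ≤ x (Fin.last n) := by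
    by_cases h : M ≤ η
    · exact ⟨1, by norm_num, by norm_num, by linarith, by simpa using hgβ⟩
    · push Not at h
      have hM' : 0 < M := by linarith
      refine ⟨η / M, by positivity, (div_le_one hM').2 h.le, ?_, ?_⟩
      · rw [div_mul_cancel₀ _ hM'.ne']
      · have : (1 - η / M) * M = M - η := by field_simp
        rw [this, hη]
        nlinarith
  have hkey : ∀ d, ∑ j, q j * b j d ≤ M * b i d := by
    intro d
    have h2 : β * ∑ j, q j * b j d ≤ β * (M * b i d) := by
      have : β * (M * b i d) = ∑ j, q j * b j (Fin.last n) * b i d := by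
        rw [← Finset.sum_mul, hMβ]; ring
      rw [this, Finset.mul_sum]
      refine Finset.sum_le_sum fun j _ => ?_
      by_cases hj : s j = 0
      · have : q j = 0 := by simp [hq, hj]
        simp [this]
      · have := mul_le_mul_of_nonneg_left (hfirst j hj d) (hq0 j)
        nlinarith
    exact le_of_mul_le_mul_left h2 hβ0
  -- The mass `θ * q j` is spread over the other coordinates in proportion to the mass `l i c` of `i`
  -- there, whose total is `L`.
  refine ⟨fun j => Fin.snoc (α := fun _ => ℝ)
    (fun c => l j c.castSucc + l i c.castSucc * (θ * q j / L)
      - if j = i then l i c.castSucc * (η / L) else 0)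
    ((1 - θ) * q j + if j = i then g else 0), ⟨?_, ?_, ?_⟩, ?_⟩
  · intro j c
    refine Fin.lastCases ?_ (fun c => ?_) c
    · simp only [Fin.snoc_last]
      have : 0 ≤ g := by
        have : 0 ≤ μ := hl.nonneg _ _
        linarith
      have := mul_nonneg (sub_nonneg.2 hθ1) (hq0 j)
      split_ifs <;> linarith
    · simp only [Fin.snoc_castSucc]
      have h1 := hl.nonneg j c.castSucc
      have h2 := hl.nonneg i c.castSucc
      have h3 : 0 ≤ l i c.castSucc * (θ * q j / L) :=
        mul_nonneg h2 (div_nonneg (mul_nonneg hθ0 (hq0 j)) hL0.le)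
      split_ifs with h
      · subst h
        have : η / L ≤ 1 := (div_le_one hL0).2 hLη
        nlinarith
      · linarith
  · intro j
    rw [Fin.sum_univ_castSucc]
    simp only [Fin.snoc_castSucc, Fin.snoc_last, Finset.sum_sub_distrib, Finset.sum_add_distrib,
      ← Finset.sum_mul]
    have h1 := hl.total j
    rw [Fin.sum_univ_castSucc] at h1
    rw [← hL]
    have h2 : L * (θ * q j / L) = θ * q j := by field_simp
    rw [h2]
    by_cases h : j = i
    · subst h
      simp only [if_true, ← Finset.sum_mul, hqi]
      have h3 : L * (η / L) = η := by field_simp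
      rw [← hL, h3]
      rw [← hL] at h1
      linarith
    · simp only [h, if_false, Finset.sum_const_zero]
      by_cases hj : s j = 0
      · have : q j = 0 := by simp [hq, hj]
        simp only [this, Pi.add_apply, hj, Pi.single_eq_of_ne h]
        have := Finset.sum_nonneg fun (c : Fin n) (_ : c ∈ Finset.univ) => hl.nonneg j c.castSucc
        linarith
      · have : q j = l j (Fin.last n) := by simp [hq, hj, h]
        rw [this]; linarith
  · intro c
    refine Fin.lastCases ?_ (fun c => ?_) c
    · simp only [Fin.snoc_last, add_mul, Finset.sum_add_distrib, ite_mul, zero_mul,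
        Finset.sum_ite_eq', Finset.mem_univ, if_true, mul_assoc, ← Finset.mul_sum]
      rw [hMβ]
      calc _ = ((1 - θ) * M + g) * β := by ring
        _ ≤ _ := hθ
    · simp only [Fin.snoc_castSucc]
      have h2 := hl.nonneg i c.castSucc
      have e : ∀ j, (l j c.castSucc + l i c.castSucc * (θ * q j / L)
          - if j = i then l i c.castSucc * (η / L) else 0) * b j c.castSucc
          = l j c.castSucc * b j c.castSucc
            + (l i c.castSucc * θ / L) * (q j * b j c.castSucc)
            - if j = i then l i c.castSucc * (η / L) * b i c.castSucc else 0 := by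
        intro j
        split_ifs with h
        · subst h; ring
        · ring
      simp only [e, Finset.sum_sub_distrib, Finset.sum_add_distrib, ← Finset.mul_sum,
        Finset.sum_ite_eq', Finset.mem_univ, if_true]
      have h3 := hl.cost c.castSucc
      have h4 : (l i c.castSucc * θ / L) * (∑ j, q j * b j c.castSucc)
          ≤ (l i c.castSucc * θ / L) * (M * b i c.castSucc) :=
        mul_le_mul_of_nonneg_left (hkey _) (by positivity)
      have h5 : (l i c.castSucc * θ / L) * (M * b i c.castSucc)
          ≤ l i c.castSucc * (η / L) * b i c.castSucc := by
        have : l i c.castSucc * (η / L) * b i c.castSucc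
          - (l i c.castSucc * θ / L) * (M * b i c.castSucc)
          = l i c.castSucc * b i c.castSucc / L * (η - θ * M) := by ring
        have h6 : 0 ≤ l i c.castSucc * b i c.castSucc / L * (η - θ * M) :=
          mul_nonneg (div_nonneg (mul_nonneg h2 (hb _ _).le) hL0.le) (by linarith)
        linarith
      linarith
  · simp [hqi]

/-- The price vectors with the last coordinate removed. -/
abbrev low {n : ℕ} (b : ι → Fin (n + 1) → ℝ) : ι → Fin n → ℝ := fun i c => b i c.castSucc

/-- The slice of `Reg` at a height which `i` can absorb completely: the demand of `i` decreases by
the corresponding amount and the last coordinate disappears. -/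
lemma slice_low {n : ℕ} {b : ι → Fin (n + 1) → ℝ} (hb : ∀ i c, 0 < b i c) {s : ι → ℝ} {i : ι}
    (hfirst : ∀ j, s j ≠ 0 → ∀ d, b j d * b i (Fin.last n) ≤ b i d * b j (Fin.last n))
    (hsi : s i = 0) {σ : ℝ} {x : Fin (n + 1) → ℝ}
    (hx : 0 ≤ x (Fin.last n)) (hx' : x (Fin.last n) ≤ b i (Fin.last n) * σ) :
    x ∈ Reg b (s + Pi.single i σ) ↔ (fun c : Fin n => x c.castSucc) ∈
      Reg (low b) (s + Pi.single i (σ - x (Fin.last n) / b i (Fin.last n))) := by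
  have hβ0 : 0 < b i (Fin.last n) := hb _ _
  have hle : x (Fin.last n) / b i (Fin.last n) ≤ σ := by rw [div_le_iff₀ hβ0]; linarith
  constructor
  · rintro ⟨l₀, hl₀⟩
    obtain ⟨l, hl, hli⟩ := exchange hb hfirst hsi hl₀
    rw [min_eq_right hle] at hli
    refine ⟨fun j c => l j c.castSucc, fun j c => hl.nonneg _ _, fun j => ?_, fun c => hl.cost _⟩
    have h1 := hl.total j
    rw [Fin.sum_univ_castSucc] at h1
    have hc := hl.cost (Fin.last n)
    have hnn : ∀ j ∈ Finset.univ, 0 ≤ l j (Fin.last n) * b j (Fin.last n) :=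
      fun j _ => mul_nonneg (hl.nonneg _ _) (hb _ _).le
    have hi : x (Fin.last n) ≤ l i (Fin.last n) * b i (Fin.last n) := (div_le_iff₀ hβ0).1 hli
    by_cases h : j = i
    · subst h
      have h2 := Finset.single_le_sum hnn (Finset.mem_univ j)
      have h3 : l j (Fin.last n) ≤ x (Fin.last n) / b j (Fin.last n) := by
        rw [le_div_iff₀ hβ0]; linarith
      simp only [Pi.add_apply, Pi.single_eq_same] at h1 ⊢
      linarith
    · have h2 := Finset.add_le_sum hnn (Finset.mem_univ j) (Finset.mem_univ i) h
      have h3 : l j (Fin.last n) ≤ 0 := by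
        by_contra h4
        push Not at h4
        have := mul_pos h4 (hb j (Fin.last n))
        linarith
      simp only [Pi.add_apply, Pi.single_eq_of_ne h] at h1 ⊢
      linarith
  · rintro ⟨l, hl⟩
    refine ⟨fun j => Fin.snoc (α := fun _ => ℝ) (l j)
      (if j = i then x (Fin.last n) / b i (Fin.last n) else 0), ⟨?_, ?_, ?_⟩⟩
    · intro j c
      refine Fin.lastCases ?_ (fun c => ?_) c
      · simp only [Fin.snoc_last]
        split_ifs
        · positivity
        · exact le_rfl
      · simp only [Fin.snoc_castSucc]; exact hl.nonneg _ _
    · intro j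
      have h1 := hl.total j
      rw [Fin.sum_univ_castSucc]
      simp only [Fin.snoc_last, Fin.snoc_castSucc]
      by_cases h : j = i
      · subst h
        simp only [Pi.add_apply, Pi.single_eq_same, if_true] at h1 ⊢
        linarith
      · simp only [Pi.add_apply, Pi.single_eq_of_ne h, h, if_false] at h1 ⊢
        linarith
    · intro c
      refine Fin.lastCases ?_ (fun c => ?_) c
      · simp only [Fin.snoc_last, ite_mul, zero_mul, Finset.sum_ite_eq', Finset.mem_univ, if_true]
        rw [div_mul_cancel₀ _ hβ0.ne']
      · simp only [Fin.snoc_castSucc]; exact hl.cost _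

/-- At heights where the demand `σ` of `i` is met by the last coordinate alone, `Reg` is a translate
of the region without this demand. -/
lemma slice_high {n : ℕ} {b : ι → Fin (n + 1) → ℝ} (hb : ∀ i c, 0 < b i c) {s : ι → ℝ} {i : ι}
    (hfirst : ∀ j, s j ≠ 0 → ∀ d, b j d * b i (Fin.last n) ≤ b i d * b j (Fin.last n))
    (hsi : s i = 0) {σ : ℝ} (hσ : 0 ≤ σ) {x : Fin (n + 1) → ℝ}
    (hx : b i (Fin.last n) * σ ≤ x (Fin.last n)) :
    x ∈ Reg b (s + Pi.single i σ) ↔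
      x - Pi.single (Fin.last n) (b i (Fin.last n) * σ) ∈ Reg b s := by
  have hβ0 : 0 < b i (Fin.last n) := hb _ _
  constructor
  · rintro ⟨l₀, hl₀⟩
    obtain ⟨l, hl, hli⟩ := exchange hb hfirst hsi hl₀
    rw [min_eq_left (by rw [le_div_iff₀ hβ0]; linarith)] at hli
    refine ⟨fun j c => l j c - if j = i ∧ c = Fin.last n then σ else 0, ?_, ?_, ?_⟩
    · intro j c
      have := hl.nonneg j c
      split_ifs with h
      · rw [h.1, h.2]; linarith
      · linarith
    · intro j
      have h1 := hl.total j
      rw [Finset.sum_sub_distrib]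
      by_cases h : j = i
      · subst h
        simp only [Pi.add_apply, Pi.single_eq_same, true_and, Finset.sum_ite_eq', Finset.mem_univ,
          if_true] at h1 ⊢
        linarith
      · simp only [Pi.add_apply, Pi.single_eq_of_ne h, h, false_and, if_false,
          Finset.sum_const_zero] at h1 ⊢
        linarith
    · intro c
      have h1 := hl.cost c
      simp only [sub_mul, Finset.sum_sub_distrib, Pi.sub_apply]
      by_cases h : c = Fin.last n
      · subst h
        simp only [and_true, ite_mul, zero_mul, Finset.sum_ite_eq', Finset.mem_univ, if_true,
          Pi.single_eq_same]
        linarith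
      · simp only [h, and_false, if_false, zero_mul, Finset.sum_const_zero, Pi.single_eq_of_ne h]
        linarith
  · rintro ⟨l, hl⟩
    refine ⟨fun j c => l j c + if j = i ∧ c = Fin.last n then σ else 0, ?_, ?_, ?_⟩
    · intro j c
      have := hl.nonneg j c
      split_ifs with h <;> linarith
    · intro j
      have h1 := hl.total j
      rw [Finset.sum_add_distrib]
      by_cases h : j = i
      · subst h
        simp only [Pi.add_apply, Pi.single_eq_same, true_and, Finset.sum_ite_eq', Finset.mem_univ,
          if_true] at h1 ⊢
        linarith
      · simp only [Pi.add_apply, Pi.single_eq_of_ne h, h, false_and, if_false,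
          Finset.sum_const_zero] at h1 ⊢
        linarith
    · intro c
      have h1 := hl.cost c
      simp only [add_mul, Finset.sum_add_distrib, Pi.sub_apply] at h1 ⊢
      by_cases h : c = Fin.last n
      · subst h
        simp only [and_true, ite_mul, zero_mul, Finset.sum_ite_eq', Finset.mem_univ, if_true,
          Pi.single_eq_same] at h1 ⊢
        linarith
      · simp only [h, and_false, if_false, zero_mul, Finset.sum_const_zero,
          Pi.single_eq_of_ne h] at h1 ⊢
        linarith

/-! ### Covolumes and Fubini -/

lemma Reg_subset {n : ℕ} {b : ι → Fin n → ℝ} (hb : ∀ i c, 0 < b i c) (s : ι → ℝ) :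
    Reg b s ⊆ orthant n := by
  rintro x ⟨l, hl⟩ c
  exact le_trans (Finset.sum_nonneg fun i _ => mul_nonneg (hl.nonneg _ _) (hb _ _).le) (hl.cost c)

lemma Reg_convex {n : ℕ} (b : ι → Fin n → ℝ) (s : ι → ℝ) : Convex ℝ (Reg b s) := by
  rintro x ⟨l, hl⟩ y ⟨m, hm⟩ p q hp hq hpq
  refine ⟨fun i c => p * l i c + q * m i c, fun i c => ?_, fun i => ?_, fun c => ?_⟩
  · have := hl.nonneg i c
    have := hm.nonneg i c
    positivity
  · rw [Finset.sum_add_distrib, ← Finset.mul_sum, ← Finset.mul_sum]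
    have h1 := mul_le_mul_of_nonneg_left (hl.total i) hp
    have h2 := mul_le_mul_of_nonneg_left (hm.total i) hq
    have : s i = p * s i + q * s i := by rw [← add_mul, hpq, one_mul]
    linarith
  · have h1 := mul_le_mul_of_nonneg_left (hl.cost c) hp
    have h2 := mul_le_mul_of_nonneg_left (hm.cost c) hq
    simp only [add_mul, Finset.sum_add_distrib, mul_assoc, ← Finset.mul_sum, Pi.add_apply,
      Pi.smul_apply, smul_eq_mul]
    linarith

lemma Reg_anti {n : ℕ} (b : ι → Fin n → ℝ) {s t : ι → ℝ} (h : s ≤ t) : Reg b t ⊆ Reg b s := by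
  rintro x ⟨l, hl⟩
  exact ⟨l, hl.nonneg, fun i => (h i).trans (hl.total i), hl.cost⟩

lemma orthant_convex (n : ℕ) : Convex ℝ (orthant n) := by
  intro x hx y hy p q hp hq _ i
  have := hx i
  have := hy i
  simp only [Pi.add_apply, Pi.smul_apply, smul_eq_mul]
  positivity

/-- Convex sets in finite dimension are null measurable, which avoids showing that `Reg` is closed. -/
lemma Comp_nullMeasurable {n : ℕ} (b : ι → Fin n → ℝ) (s : ι → ℝ) :
    NullMeasurableSet (Comp b s) :=
  ((orthant_convex n).nullMeasurableSet volume).diff ((Reg_convex b s).nullMeasurableSet volume)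

lemma Comp_lt_top {n : ℕ} (b : ι → Fin n → ℝ) {s : ι → ℝ}
    (hs : ∀ i, 0 ≤ s i) : volume (Comp b s) < ⊤ := by
  -- If a single budget `x c` pays for all demands, serving everything through `c` is a plan.
  refine lt_of_le_of_lt (measure_mono (t := Set.Icc 0 (fun c => ∑ i, s i * b i c)) ?_)
    isCompact_Icc.measure_lt_top
  rintro x ⟨hx, hx'⟩
  refine ⟨hx, fun c => ?_⟩
  by_contra hc
  refine hx' ⟨fun i d => if d = c then s i else 0, fun i d => ?_, fun i => by simp, fun d => ?_⟩
  · split_ifs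
    exacts [hs i, le_rfl]
  · by_cases h : d = c
    · subst h
      simpa using (not_le.1 hc).le
    · simpa [h] using hx d

lemma covol_mono {n : ℕ} (b : ι → Fin n → ℝ) {s t : ι → ℝ}
    (ht : ∀ i, 0 ≤ t i) (hst : s ≤ t) : covol b s ≤ covol b t :=
  ENNReal.toReal_mono (Comp_lt_top b ht).ne
    (measure_mono (Set.sdiff_subset_sdiff_right (Reg_anti b hst)))

lemma add_single_nonneg {s : ι → ℝ} (hs : ∀ j, 0 ≤ s j) (i : ι) {τ : ℝ} (hτ : 0 ≤ τ) (j : ι) :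
    0 ≤ (s + (Pi.single i τ : ι → ℝ)) j := by
  have h1 : 0 ≤ (Pi.single i τ : ι → ℝ) := Pi.single_nonneg.2 hτ
  exact add_nonneg (hs j) (h1 j)

lemma covol_intervalIntegrable {n : ℕ} (b : ι → Fin n → ℝ) {s : ι → ℝ}
    (hs : ∀ j, 0 ≤ s j) (i : ι) {σ : ℝ} (hσ : 0 ≤ σ) :
    IntervalIntegrable (fun τ => covol b (s + Pi.single i τ)) volume 0 σ := by
  apply MonotoneOn.intervalIntegrable
  rw [Set.uIcc_of_le hσ]
  intro x hx y hy hxy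
  refine covol_mono b (add_single_nonneg hs i hy.1) ?_
  gcongr

/-- Fubini along the last coordinate `h` on the part of the complement below `b i last * σ`, whose
slices are given by `slice_low`, with the substitution `τ = σ - h / b i last`. -/
lemma vol_low {n : ℕ} {b : ι → Fin (n + 1) → ℝ} (hb : ∀ i c, 0 < b i c) {s : ι → ℝ} {i : ι}
    (hfirst : ∀ j, s j ≠ 0 → ∀ d, b j d * b i (Fin.last n) ≤ b i d * b j (Fin.last n))
    (hs : ∀ j, 0 ≤ s j) (hsi : s i = 0) {σ : ℝ} (hσ : 0 ≤ σ) :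
    (volume (Comp b (s + Pi.single i σ) ∩ {x | x (Fin.last n) < b i (Fin.last n) * σ})).toReal
      = b i (Fin.last n) * ∫ τ in (0 : ℝ)..σ, covol (low b) (s + Pi.single i τ) := by
  set β := b i (Fin.last n) with hβ
  have hβ0 : 0 < β := hb _ _
  set A := Comp b (s + Pi.single i σ) ∩ {x | x (Fin.last n) < β * σ} with hA
  have hAm : NullMeasurableSet A := (Comp_nullMeasurable b _).inter
    (measurableSet_lt (measurable_pi_apply _) measurable_const).nullMeasurableSet
  have mp := (volume_preserving_piFinSuccAbove (fun _ : Fin (n + 1) => ℝ) (Fin.last n)).symm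
  set φ := (MeasurableEquiv.piFinSuccAbove (fun _ : Fin (n + 1) => ℝ) (Fin.last n)).symm with hφ
  have hAm' : NullMeasurableSet (φ ⁻¹' A) := hAm.preimage mp.quasiMeasurePreserving
  have hlast : ∀ p, φ p (Fin.last n) = p.1 := fun p => by
    simp [hφ]
  have hcs : ∀ p (c : Fin n), φ p c.castSucc = p.2 c := fun p c => by
    simp [hφ]
  have hslice : ∀ h : ℝ, {y | (h, y) ∈ φ ⁻¹' A} =
      if h ∈ Set.Ico 0 (β * σ) then Comp (low b) (s + Pi.single i (σ - h / β)) else ∅ := by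
    intro h
    split_ifs with hh
    · ext y
      have h1 := slice_low hb hfirst hsi (σ := σ) (x := φ (h, y))
        (by rw [hlast]; exact hh.1) (by rw [hlast]; exact hh.2.le)
      simp only [hcs, hlast] at h1
      have h2 : φ (h, y) ∈ orthant (n + 1) ↔ y ∈ orthant n := by
        refine ⟨fun H c => ?_, fun H c => ?_⟩
        · have := H c.castSucc
          rwa [hcs] at this
        · refine Fin.lastCases ?_ (fun c => ?_) c
          · rw [hlast]; exact hh.1
          · rw [hcs]; exact H c
      simp only [Set.mem_ofPred_eq, Set.mem_preimage, hA, Set.mem_inter_iff, Comp, Set.mem_sdiff,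
        hlast, hh.2, and_true, h2, h1]
      rfl
    · rw [Set.eq_empty_iff_forall_notMem]
      rintro y ⟨⟨h1, -⟩, h2⟩
      have h3 := h1 (Fin.last n)
      simp only [Set.mem_ofPred_eq, hlast] at h2 h3
      exact hh ⟨h3, h2⟩
  have hf : AEMeasurable ((φ ⁻¹' A).indicator (1 : ℝ × (Fin n → ℝ) → ENNReal)) volume :=
    (aemeasurable_indicator_const_iff (1 : ENNReal)).2 hAm'
  have hnull : ∀ h : ℝ, NullMeasurableSet {y | (h, y) ∈ φ ⁻¹' A} := by
    intro h
    rw [hslice]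
    split_ifs
    · exact Comp_nullMeasurable _ _
    · exact MeasurableSet.empty.nullMeasurableSet
  have hint : ∀ h : ℝ, ∫⁻ y, (φ ⁻¹' A).indicator (1 : ℝ × (Fin n → ℝ) → ENNReal) (h, y) =
      volume {y | (h, y) ∈ φ ⁻¹' A} := by
    intro h
    rw [← lintegral_indicator_one₀ (hnull h)]
    rfl
  rw [Measure.volume_eq_prod] at hf
  have hvol : volume A = ∫⁻ h : ℝ, volume {y | (h, y) ∈ φ ⁻¹' A} := by
    rw [← mp.measure_preimage hAm, ← lintegral_indicator_one₀ hAm', Measure.volume_eq_prod,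
      lintegral_prod _ hf]
    exact lintegral_congr hint
  have hmeas : AEMeasurable (fun h : ℝ => volume {y | (h, y) ∈ φ ⁻¹' A}) := by
    simp only [← hint]
    exact hf.lintegral_prod_right'
  rw [hvol, ← integral_toReal hmeas]
  · simp only [hslice]
    have : ∀ h : ℝ, (volume (if h ∈ Set.Ico 0 (β * σ) then
        Comp (low b) (s + Pi.single i (σ - h / β)) else ∅)).toReal =
        (Set.Ico 0 (β * σ)).indicator
          (fun h => covol (low b) (s + Pi.single i (σ - h / β))) h := by
      intro h
      by_cases hh : h ∈ Set.Ico 0 (β * σ)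
      · rw [if_pos hh, Set.indicator_of_mem hh]; rfl
      · rw [if_neg hh, Set.indicator_of_notMem hh]; simp
    simp only [this]
    rw [integral_indicator measurableSet_Ico, integral_Ico_eq_integral_Ioc,
      ← intervalIntegral.integral_of_le (by positivity)]
    have hsub := intervalIntegral.integral_comp_sub_div (a := 0) (b := β * σ)
      (fun τ => covol (low b) (s + Pi.single i τ)) hβ0.ne' σ
    rw [mul_div_cancel_left₀ _ hβ0.ne', sub_self, zero_div, sub_zero, smul_eq_mul] at hsub
    exact hsub
  · refine Filter.Eventually.of_forall fun h => ?_
    simp only [hslice]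
    split_ifs with hh
    · refine Comp_lt_top _ (add_single_nonneg hs i ?_)
      rw [sub_nonneg, div_le_iff₀ hβ0]
      linarith [hh.2]
    · simp

/-- The recursion on the dimension: the part below height `b i last * σ` is `vol_low`, and the part
above is a translate of `Comp b s` by `slice_high`. -/
lemma peel {n : ℕ} {b : ι → Fin (n + 1) → ℝ} (hb : ∀ i c, 0 < b i c) {s : ι → ℝ} {i : ι}
    (hfirst : ∀ j, s j ≠ 0 → ∀ d, b j d * b i (Fin.last n) ≤ b i d * b j (Fin.last n))
    (hs : ∀ j, 0 ≤ s j) (hsi : s i = 0) {σ : ℝ} (hσ : 0 ≤ σ) :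
    covol b (s + Pi.single i σ) =
      b i (Fin.last n) * (∫ τ in (0 : ℝ)..σ, covol (low b) (s + Pi.single i τ)) + covol b s := by
  rw [← vol_low hb hfirst hs hsi hσ]
  have hm : MeasurableSet {x : Fin (n + 1) → ℝ | x (Fin.last n) < b i (Fin.last n) * σ} :=
    measurableSet_lt (measurable_pi_apply _) measurable_const
  have hfin := Comp_lt_top b (add_single_nonneg hs i hσ)
  unfold covol
  rw [← measure_inter_add_sdiff _ hm, ENNReal.toReal_add]
  · congr 2
    rw [← measure_preimage_add_right volume
      (-Pi.single (Fin.last n) (b i (Fin.last n) * σ)) (Comp b s)]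
    congr 1
    ext x
    simp only [← sub_eq_add_neg, Comp, Set.mem_sdiff, Set.mem_preimage, Set.mem_ofPred_eq, not_lt]
    have hβσ : 0 ≤ b i (Fin.last n) * σ := mul_nonneg (hb _ _).le hσ
    constructor
    · rintro ⟨⟨h1, h2⟩, h3⟩
      refine ⟨fun c => ?_, fun h => h2 ((slice_high hb hfirst hsi hσ h3).2 h)⟩
      by_cases h : c = Fin.last n
      · subst h; simpa using h3
      · simpa [h] using h1 c
    · rintro ⟨h1, h2⟩
      have h3 : b i (Fin.last n) * σ ≤ x (Fin.last n) := by simpa using h1 (Fin.last n)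
      refine ⟨⟨fun c => ?_, fun h => h2 ((slice_high hb hfirst hsi hσ h3).1 h)⟩, h3⟩
      by_cases h : c = Fin.last n
      · subst h; linarith
      · simpa [h] using h1 c
  · exact ((measure_mono Set.inter_subset_left).trans_lt hfin).ne
  · exact ((measure_mono Set.sdiff_subset).trans_lt hfin).ne

/-! ### Mixed differences -/

/-- The indicator vector of a finite set of indices. -/
def ind (I : Finset ι) : ι → ℝ := fun i => if i ∈ I then 1 else 0

/-- The mixed forward difference of `g` at `s` with unit steps in the directions `T`. The sign is
written `(-1) ^ (#T + #I)` rather than `(-1) ^ (#T - #I)` to avoid subtraction. -/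
def Dif (T : Finset ι) (g : (ι → ℝ) → ℝ) (s : ι → ℝ) : ℝ :=
  ∑ I ∈ T.powerset, (-1 : ℝ) ^ (T.card + I.card) * g (s + ind I)

lemma ind_nonneg (I : Finset ι) (i : ι) : 0 ≤ ind I i := by
  unfold ind; split_ifs <;> norm_num

lemma ind_insert {I : Finset ι} {i : ι} (hi : i ∉ I) :
    ind (insert i I) = ind I + Pi.single i 1 := by
  ext j
  by_cases h : j = i
  · subst h; simp [ind, hi]
  · simp [ind, h]

lemma Dif_insert {T : Finset ι} {i : ι} (hi : i ∉ T) (g : (ι → ℝ) → ℝ) (s : ι → ℝ) :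
    Dif (insert i T) g s = Dif T g (s + Pi.single i 1) - Dif T g s := by
  unfold Dif
  rw [Finset.sum_powerset_insert hi, add_comm, sub_eq_add_neg, ← Finset.sum_neg_distrib]
  congr 1
  · refine Finset.sum_congr rfl fun I hI => ?_
    have hI' : i ∉ I := fun h => hi (Finset.mem_powerset.1 hI h)
    rw [Finset.card_insert_of_notMem hi, Finset.card_insert_of_notMem hI', ind_insert hI']
    have : s + Pi.single i 1 + ind I = s + (ind I + Pi.single i 1) := by abel
    rw [this]
    ring
  · refine Finset.sum_congr rfl fun I hI => ?_
    rw [Finset.card_insert_of_notMem hi]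
    ring

/-- `peel` holds simultaneously for all the terms of a mixed difference over `T`. -/
lemma Dif_covol_peel {n : ℕ} {b : ι → Fin (n + 1) → ℝ} (hb : ∀ i c, 0 < b i c) {s : ι → ℝ} {i : ι}
    {T : Finset ι} (hiT : i ∉ T)
    (hfirst : ∀ j, j ∈ T ∨ s j ≠ 0 →
      ∀ d, b j d * b i (Fin.last n) ≤ b i d * b j (Fin.last n))
    (hs : ∀ j, 0 ≤ s j) (hsi : s i = 0) {σ : ℝ} (hσ : 0 ≤ σ) :
    Dif T (covol b) (s + Pi.single i σ) = b i (Fin.last n) *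
      (∫ τ in (0 : ℝ)..σ, Dif T (covol (low b)) (s + Pi.single i τ)) + Dif T (covol b) s := by
  unfold Dif
  have hcomm : ∀ (I : Finset ι) (τ : ℝ),
      s + Pi.single i τ + ind I = (s + ind I) + Pi.single i τ := fun I τ => by abel
  have hnn : ∀ (I : Finset ι) j, 0 ≤ (s + ind I) j := fun I j => add_nonneg (hs j) (ind_nonneg I j)
  rw [intervalIntegral.integral_finsetSum]
  · rw [Finset.mul_sum, ← Finset.sum_add_distrib]
    refine Finset.sum_congr rfl fun I hI => ?_
    have hIT := Finset.mem_powerset.1 hI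
    simp only [hcomm]
    rw [intervalIntegral.integral_const_mul, peel hb (s := s + ind I) (i := i) ?_ (hnn I) ?_ hσ]
    · ring
    · intro j hj
      refine hfirst j ?_
      by_contra hcon
      push Not at hcon
      have : j ∉ I := fun h => hcon.1 (hIT h)
      exact hj (by simp [ind, hcon.2, this])
    · have : i ∉ I := fun h => hiT (hIT h)
      simp [ind, hsi, this]
  · intro I _
    simp only [hcomm]
    exact (covol_intervalIntegrable _ (hnn I) i hσ).const_mul _

/-- `i` is first for `j`: the ratio `b j d / b i d` of prices is largest in the last coordinate, so
`i` rather than `j` should be served through it. -/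
def First {n : ℕ} (b : ι → Fin (n + 1) → ℝ) (i j : ι) : Prop :=
  ∀ d, b j d * b i (Fin.last n) ≤ b i d * b j (Fin.last n)

/-- In every coordinate `c`, any two indices are comparable for the relation `First` with `c` as the
last coordinate. Requiring this for all `c` makes the notion stable under `low`. -/
def Chain {n : ℕ} (b : ι → Fin n → ℝ) : Prop :=
  ∀ c i j, (∀ d, b j d * b i c ≤ b i d * b j c) ∨ (∀ d, b i d * b j c ≤ b j d * b i c)

lemma First.trans {n : ℕ} {b : ι → Fin (n + 1) → ℝ} (hb : ∀ i c, 0 < b i c) {i j k : ι}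
    (h1 : First b i j) (h2 : First b j k) : First b i k := by
  intro d
  have h3 := mul_le_mul_of_nonneg_right (h1 d) (hb k (Fin.last n)).le
  have h4 := mul_le_mul_of_nonneg_right (h2 d) (hb i (Fin.last n)).le
  have h5 := hb j (Fin.last n)
  nlinarith

lemma exists_first {n : ℕ} {b : ι → Fin (n + 1) → ℝ} (hb : ∀ i c, 0 < b i c) (hc : Chain b)
    {A : Finset ι} (hA : A.Nonempty) : ∃ i ∈ A, ∀ j ∈ A, First b i j := by
  induction hA using Finset.Nonempty.cons_induction with
  | singleton a => exact ⟨a, by simp, by simp [First]⟩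
  | cons a s ha hs ih =>
    obtain ⟨i, hi, hij⟩ := ih
    rcases hc (Fin.last n) i a with h | h
    · refine ⟨i, by simp [hi], fun j hj => ?_⟩
      rcases Finset.mem_cons.1 hj with rfl | hj
      exacts [h, hij j hj]
    · refine ⟨a, by simp, fun j hj => ?_⟩
      rcases Finset.mem_cons.1 hj with rfl | hj
      · exact fun d => le_rfl
      · exact First.trans hb h (hij j hj)

/-- The mixed difference of `covol b` over `T` is the constant `v`, at all base points `s ≥ 0` vanishing
on `T`. In dimension `0` the covolume is `1` except at `s = 0`, where it is `0`, so the base point `0`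
has to be excluded there. -/
def HasDif {n : ℕ} (b : ι → Fin n → ℝ) (T : Finset ι) (v : ℝ) : Prop :=
  ∀ s : ι → ℝ, (∀ j, 0 ≤ s j) → (∀ j ∈ T, s j = 0) → (n = 0 → s ≠ 0) → Dif T (covol b) s = v

lemma integral_const_Ioc {f : ℝ → ℝ} {v σ : ℝ} (hσ : 0 ≤ σ) (h : ∀ τ, 0 < τ → f τ = v) :
    ∫ τ in (0 : ℝ)..σ, f τ = σ * v := by
  rw [intervalIntegral.integral_of_le hσ, setIntegral_congr_fun measurableSet_Ioc
    (g := fun _ => v) (fun τ hτ => h τ hτ.1)]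
  simp [hσ]

lemma HasDif.integral {n : ℕ} {b : ι → Fin n → ℝ} {T : Finset ι} {v : ℝ} (h : HasDif b T v)
    {s : ι → ℝ} (hs : ∀ j, 0 ≤ s j) (hsT : ∀ j ∈ T, s j = 0) {i : ι} (hi : i ∉ T) {σ : ℝ}
    (hσ : 0 ≤ σ) : ∫ τ in (0 : ℝ)..σ, Dif T (covol b) (s + Pi.single i τ) = σ * v := by
  -- The integral runs over `τ > 0`, where `s + τ e_i ≠ 0`, so that the condition on base points
  -- in dimension `0` is met.
  refine integral_const_Ioc hσ fun τ hτ => h _ (add_single_nonneg hs i hτ.le) ?_ ?_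
  · intro j hj
    have : j ≠ i := fun h => hi (h ▸ hj)
    simp [this, hsT j hj]
  · intro _ h0
    have h1 := congrFun h0 i
    simp only [Pi.add_apply, Pi.single_eq_same, Pi.zero_apply] at h1
    have := hs i
    linarith

/-- Reduction of the dimension for mixed differences. If the best index of `T ∪ supp s` lies in `T`,
one may peel `i` itself, and the difference in direction `i` is `b i last * v`. Otherwise the best index
is outside `T`, peeling it contributes only differences over `T` in lower dimension, which vanish by
`h0`, and it disappears from the support of `s`. -/
lemma HasDif.step {n : ℕ} {b : ι → Fin (n + 1) → ℝ} (hb : ∀ i c, 0 < b i c) (hc : Chain b)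
    {T : Finset ι} {i : ι} (hi : i ∈ T) (hfirst : ∀ j ∈ T, First b i j) {v : ℝ}
    (hv : HasDif (low b) (T.erase i) v) (h0 : HasDif (low b) T 0) :
    HasDif b T (b i (Fin.last n) * v) := by
  intro s hs hsT _
  induction hN : (Finset.univ.filter fun j => s j ≠ 0).card using Nat.strong_induction_on
    generalizing s with
  | _ N ih =>
  obtain ⟨i', hi', hf'⟩ := exists_first hb hc (A := T ∪ Finset.univ.filter fun j => s j ≠ 0)
    ⟨i, by simp [hi]⟩
  by_cases hiT : i' ∈ T
  · have hf : ∀ j, j ∈ T.erase i ∨ s j ≠ 0 → First b i j := by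
      intro j hj
      refine First.trans hb (hfirst i' hiT) (hf' j ?_)
      rcases hj with hj | hj
      · simp [Finset.mem_of_mem_erase hj]
      · simp [hj]
    have h1 := Dif_covol_peel hb (Finset.notMem_erase i T) hf hs (hsT i hi) zero_le_one
    rw [hv.integral hs (fun j hj => hsT j (Finset.mem_of_mem_erase hj))
      (Finset.notMem_erase i T) zero_le_one] at h1
    conv_lhs => rw [← Finset.insert_erase hi]
    rw [Dif_insert (Finset.notMem_erase i T), h1]
    ring
  · have hsi' : s i' ≠ 0 := by simpa [hiT] using hi'
    set s' := Function.update s i' 0 with hs'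
    have hss : s = s' + Pi.single i' (s i') := by
      ext j
      by_cases h : j = i'
      · subst h; simp [hs']
      · simp [hs', h]
    have hs'0 : ∀ j, 0 ≤ s' j := by
      intro j
      by_cases h : j = i'
      · subst h; simp [hs']
      · simp [hs', h, hs j]
    have hs'T : ∀ j ∈ T, s' j = 0 := by
      intro j hj
      have : j ≠ i' := fun h => hiT (h ▸ hj)
      simp [hs', this, hsT j hj]
    have hs'i : s' i' = 0 := by simp [hs']
    have hsupp : ∀ j, s' j ≠ 0 → s j ≠ 0 := by
      intro j hj
      by_cases h : j = i'
      · subst h; exact absurd hs'i hj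
      · simpa [hs', h] using hj
    have h1 := Dif_covol_peel hb hiT (fun j hj => hf' j (by
      rcases hj with hj | hj
      · simp [hj]
      · simp [hsupp j hj])) hs'0 hs'i (hs i')
    rw [← hss, h0.integral hs'0 hs'T hiT (hs i')] at h1
    rw [h1]
    rw [ih _ ?_ s' hs'0 hs'T (by simp) rfl]
    · ring
    · rw [← hN]
      refine Finset.card_lt_card ⟨fun j hj => ?_, fun h => ?_⟩
      · simp only [Finset.mem_filter, Finset.mem_univ, true_and] at hj ⊢
        exact hsupp j hj
      · have hmem : i' ∈ Finset.univ.filter fun j => s' j ≠ 0 :=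
          h (Finset.mem_filter.2 ⟨Finset.mem_univ _, hsi'⟩)
        exact (Finset.mem_filter.1 hmem).2 hs'i

lemma Chain.low {n : ℕ} {b : ι → Fin (n + 1) → ℝ} (hc : Chain b) : Chain (low b) := by
  intro c i j
  rcases hc c.castSucc i j with h | h
  · exact Or.inl fun d => h _
  · exact Or.inr fun d => h _

lemma covol_zero (b : ι → Fin 0 → ℝ) {s : ι → ℝ} (hs : ∀ j, 0 ≤ s j) (h0 : s ≠ 0) :
    covol b s = 1 := by
  have : Comp b s = Set.univ := by
    rw [Set.eq_univ_iff_forall]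
    refine fun x => ⟨fun c => c.elim0, ?_⟩
    rintro ⟨l, hl⟩
    apply h0
    ext i
    have := hl.total i
    simp only [Finset.univ_eq_empty, Finset.sum_empty] at this
    exact le_antisymm this (hs i)
  rw [covol, this, volume_pi, Measure.pi_of_empty]
  simp

lemma Dif_zero (b : ι → Fin 0 → ℝ) {s : ι → ℝ} (hs : ∀ j, 0 ≤ s j) (h0 : s ≠ 0) (T : Finset ι) :
    Dif T (covol b) s = ∑ I ∈ T.powerset, (-1 : ℝ) ^ (T.card + I.card) := by
  unfold Dif
  refine Finset.sum_congr rfl fun I _ => ?_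
  rw [covol_zero b (s := s + ind I) (fun j => add_nonneg (hs j) (ind_nonneg I j)), mul_one]
  intro h
  apply h0
  ext i
  have h1 := congrFun h i
  have h2 := hs i
  have h3 := ind_nonneg I i
  simp only [Pi.add_apply, Pi.zero_apply] at h1 ⊢
  linarith

/-- Mixed differences over more indices than the dimension vanish. -/
lemma HasDif.vanish {n : ℕ} {b : ι → Fin n → ℝ} (hb : ∀ i c, 0 < b i c) (hc : Chain b)
    {T : Finset ι} (hT : n < T.card) : HasDif b T 0 := by
  induction n generalizing T with
  | zero =>
    intro s hs _ h0
    rw [Dif_zero b hs (h0 rfl)]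
    have h1 := Finset.sum_powerset_neg_one_pow_card_of_nonempty (Finset.card_pos.1 hT)
    have h2 : ∑ I ∈ T.powerset, (-1 : ℝ) ^ I.card = 0 := by exact_mod_cast congrArg (Int.cast (R := ℝ)) h1
    simp only [pow_add, ← Finset.mul_sum, h2, mul_zero]
  | succ n ih =>
    obtain ⟨i, hi, hf⟩ := exists_first hb hc (Finset.card_pos.1 (by omega : 0 < T.card))
    have h := HasDif.step hb hc hi hf (v := 0)
      (ih (fun _ _ => hb _ _) hc.low (by rw [Finset.card_erase_of_mem hi]; omega))
      (ih (fun _ _ => hb _ _) hc.low (by omega))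
    rwa [mul_zero] at h

/-- `HasDif.step` with `#T` equal to the dimension, where the difference `h0` vanishes automatically. -/
lemma HasDif.peel {n : ℕ} {b : ι → Fin (n + 1) → ℝ} (hb : ∀ i c, 0 < b i c) (hc : Chain b)
    {T : Finset ι} (hT : T.card = n + 1) {i : ι} (hi : i ∈ T) (hfirst : ∀ j ∈ T, First b i j)
    {v w : ℝ} (hv : HasDif (low b) (T.erase i) v) (hw : w = b i (Fin.last n) * v) :
    HasDif b T w :=
  hw ▸ HasDif.step hb hc hi hfirst hv (.vanish (fun _ _ => hb _ _) hc.low (by omega))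

lemma HasDif.base (b : ι → Fin 0 → ℝ) : HasDif b ∅ 1 := by
  intro s hs _ h0
  rw [Dif_zero b hs (h0 rfl)]
  simp

/-! ### Values for the families -/

/-- In dimension `p + #O`, the mixed difference of `p` copies of `C_{1,…,1,2,…,2}` with `p` entries `1`
and of `#O` copies of `C_{1,…,1}` is `1`: the latter absorb the coordinates with price `2`, and only
unit prices remain. -/
lemma HasDif.one {n : ℕ} {b : ι → Fin n → ℝ} (hb : ∀ i c, 0 < b i c) (hc : Chain b)
    {A O : Finset ι} (hAO : Disjoint A O) {p : ℕ}
    (hA : ∀ i ∈ A, ∀ c, b i c = if (c : ℕ) < p then 1 else 2) (hO : ∀ i ∈ O, ∀ c, b i c = 1)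
    (hAp : A.card = p) (hn : p + O.card = n) : HasDif b (A ∪ O) 1 := by
  induction n generalizing A O p with
  | zero =>
    have h1 : A = ∅ := Finset.card_eq_zero.1 (by omega)
    have h2 : O = ∅ := Finset.card_eq_zero.1 (by omega)
    subst h1 h2
    exact HasDif.base b
  | succ n ih =>
    have hT : (A ∪ O).card = n + 1 := by rw [Finset.card_union_of_disjoint hAO]; omega
    rcases O.eq_empty_or_nonempty with rfl | ⟨o, ho⟩
    · simp only [Finset.card_empty, add_zero] at hn
      obtain ⟨i, hi⟩ := Finset.card_pos.1 (by omega : 0 < A.card)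
      have h1 : ∀ j ∈ A, ∀ c, b j c = 1 := fun j hj c => by
        rw [hA j hj c, if_pos (by omega)]
      rw [Finset.union_empty] at hT ⊢
      refine HasDif.peel hb hc hT hi (fun j hj d => by simp [h1 _ hi, h1 _ hj])
        (v := 1) ?_ (by simp [h1 _ hi])
      rw [← Finset.union_empty (A.erase i)]
      refine ih (fun _ _ => hb _ _) hc.low (by simp) (p := n) (fun j hj c => ?_) (by simp)
        (by rw [Finset.card_erase_of_mem hi]; omega) (by simp)
      rw [if_pos c.2]
      exact h1 j (Finset.mem_of_mem_erase hj) _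
    · have hOpos : 0 < O.card := Finset.card_pos.2 ⟨o, ho⟩
      have hoA : o ∉ A := fun h => Finset.disjoint_left.1 hAO h ho
      refine HasDif.peel hb hc hT (Finset.mem_union_right _ ho) (fun j hj d => ?_)
        (v := 1) ?_ (by simp [hO _ ho])
      · rw [hO o ho, hO o ho]
        rcases Finset.mem_union.1 hj with hj | hj
        · rw [hA j hj, hA j hj, if_neg (show ¬ ((Fin.last n : Fin (n + 1)) : ℕ) < p by
            rw [Fin.val_last]; omega)]
          split_ifs <;> norm_num
        · simp [hO j hj]
      · rw [Finset.erase_union_distrib, Finset.erase_eq_of_notMem hoA]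
        exact ih (fun _ _ => hb _ _) hc.low (hAO.mono_right (Finset.erase_subset _ _))
          (fun j hj c => hA j hj _) (fun j hj c => hO j (Finset.mem_of_mem_erase hj) _) hAp
          (by rw [Finset.card_erase_of_mem ho]; omega)

/-- With one more copy of `C_{1,…,1,2,…,2}` than there are entries `1`, the `#O` copies of
`C_{1,…,1}` leave a single coordinate with price `2`, which one of the copies must absorb. -/
lemma HasDif.two {n : ℕ} {b : ι → Fin n → ℝ} (hb : ∀ i c, 0 < b i c) (hc : Chain b)
    {A O : Finset ι} (hAO : Disjoint A O) {p : ℕ}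
    (hA : ∀ i ∈ A, ∀ c, b i c = if (c : ℕ) < p then 1 else 2) (hO : ∀ i ∈ O, ∀ c, b i c = 1)
    (hAp : A.card = p + 1) (hn : p + 1 + O.card = n) : HasDif b (A ∪ O) 2 := by
  induction n generalizing A O with
  | zero => omega
  | succ n ih =>
    have hT : (A ∪ O).card = n + 1 := by rw [Finset.card_union_of_disjoint hAO]; omega
    have hlast : ∀ j ∈ A, b j (Fin.last n) = 2 := fun j hj => by
      rw [hA j hj, if_neg (by rw [Fin.val_last]; omega)]
    rcases O.eq_empty_or_nonempty with rfl | ⟨o, ho⟩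
    · simp only [Finset.card_empty, add_zero] at hn
      obtain ⟨i, hi⟩ := Finset.card_pos.1 (by omega : 0 < A.card)
      rw [Finset.union_empty] at hT ⊢
      refine HasDif.peel hb hc hT hi (fun j hj d => by rw [hlast j hj, hlast i hi, hA j hj, hA i hi])
        (v := 1) ?_ (by simp [hlast _ hi])
      rw [← Finset.union_empty (A.erase i)]
      exact HasDif.one (fun _ _ => hb _ _) hc.low (by simp) (p := p)
        (fun j hj c => hA j (Finset.mem_of_mem_erase hj) _) (by simp)
        (by rw [Finset.card_erase_of_mem hi]; omega) (by simp; omega)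
    · have hoA : o ∉ A := fun h => Finset.disjoint_left.1 hAO h ho
      refine HasDif.peel hb hc hT (Finset.mem_union_right _ ho) (fun j hj d => ?_)
        (v := 2) ?_ (by simp [hO _ ho])
      · rw [hO o ho, hO o ho]
        rcases Finset.mem_union.1 hj with hj | hj
        · rw [hlast j hj, hA j hj]
          split_ifs <;> norm_num
        · simp [hO j hj]
      · have hOpos : 0 < O.card := Finset.card_pos.2 ⟨o, ho⟩
        rw [Finset.erase_union_distrib, Finset.erase_eq_of_notMem hoA]
        exact ih (fun _ _ => hb _ _) hc.low (hAO.mono_right (Finset.erase_subset _ _))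
          (fun j hj c => hA j hj _) (fun j hj c => hO j (Finset.mem_of_mem_erase hj) _) hAp
          (by rw [Finset.card_erase_of_mem ho]; omega)

/-- The family of `HasDif.two` with the entry `m ≥ p` of one copy `i₀` lowered to `1`. The coordinates
above `m` are absorbed by copies of `C_{1,…,1}`, the coordinate `m` by `i₀`, and `HasDif.one` applies to the rest. -/
lemma HasDif.drop {n : ℕ} {b : ι → Fin n → ℝ} (hb : ∀ i c, 0 < b i c) (hc : Chain b)
    {A O : Finset ι} (hAO : Disjoint A O) {p m : ℕ} {i₀ : ι} (hi₀ : i₀ ∉ A ∪ O)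
    (hb₀ : ∀ c, b i₀ c = if (c : ℕ) < p ∨ (c : ℕ) = m then 1 else 2) (hpm : p ≤ m) (hmn : m < n)
    (hA : ∀ i ∈ A, ∀ c, b i c = if (c : ℕ) < p then 1 else 2) (hO : ∀ i ∈ O, ∀ c, b i c = 1)
    (hAp : A.card = p) (hn : p + 1 + O.card = n) : HasDif b (insert i₀ (A ∪ O)) 1 := by
  induction n generalizing O with
  | zero => omega
  | succ n ih =>
    have hT : (insert i₀ (A ∪ O)).card = n + 1 := by
      rw [Finset.card_insert_of_notMem hi₀, Finset.card_union_of_disjoint hAO]; omega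
    have hlast : ∀ j ∈ A, b j (Fin.last n) = 2 := fun j hj => by
      rw [hA j hj, if_neg (by rw [Fin.val_last]; omega)]
    by_cases hm : m = n
    · have h1 : b i₀ (Fin.last n) = 1 := by rw [hb₀, if_pos (by rw [Fin.val_last]; omega)]
      refine HasDif.peel hb hc hT (Finset.mem_insert_self _ _) (fun j hj d => ?_)
        (v := 1) ?_ (by simp [h1])
      · rw [h1]
        rcases Finset.mem_insert.1 hj with rfl | hj
        · simp [h1]
        rcases Finset.mem_union.1 hj with hj | hj
        · rw [hlast j hj, hA j hj, hb₀]
          split_ifs <;> norm_num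
        · rw [hO j hj, hO j hj, hb₀]
          split_ifs <;> norm_num
      · rw [Finset.erase_insert hi₀]
        exact HasDif.one (fun _ _ => hb _ _) hc.low hAO (fun j hj c => hA j hj _)
          (fun j hj c => hO j hj _) hAp (by omega)
    · obtain ⟨o, ho⟩ := Finset.card_pos.1 (by omega : 0 < O.card)
      have h2 : b i₀ (Fin.last n) = 2 := by rw [hb₀, if_neg (by rw [Fin.val_last]; omega)]
      have hoA : o ∉ A := fun h => Finset.disjoint_left.1 hAO h ho
      have hoi : i₀ ≠ o := fun h => hi₀ (h ▸ Finset.mem_union_right _ ho)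
      refine HasDif.peel hb hc hT (Finset.mem_insert_of_mem (Finset.mem_union_right _ ho))
        (fun j hj d => ?_) (v := 1) ?_ (by simp [hO _ ho])
      · rw [hO o ho, hO o ho]
        rcases Finset.mem_insert.1 hj with rfl | hj
        · rw [h2, hb₀]
          split_ifs <;> norm_num
        rcases Finset.mem_union.1 hj with hj | hj
        · rw [hlast j hj, hA j hj]
          split_ifs <;> norm_num
        · simp [hO j hj]
      · rw [Finset.erase_insert_of_ne hoi, Finset.erase_union_distrib,
          Finset.erase_eq_of_notMem hoA]
        refine ih (fun _ _ => hb _ _) hc.low (hAO.mono_right (Finset.erase_subset _ _))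
          (fun h => hi₀ ?_) (fun c => hb₀ _) (by omega) (fun j hj c => hA j hj _)
          (fun j hj c => hO j (Finset.mem_of_mem_erase hj) _)
          (by rw [Finset.card_erase_of_mem ho]; omega)
        rcases Finset.mem_union.1 h with h | h
        · exact Finset.mem_union_left _ h
        · exact Finset.mem_union_right _ (Finset.mem_of_mem_erase h)

/-! ### Geometry of the polyhedra `C_a` -/

/-- Totally ordered vectors with entries in `{1, 2}` form a chain: if `b i ≤ b j`, the ratios
`b j d / b i d` lie between `1` and `2`, so `i` comes first in a coordinate where the ratio is `2`, and `j`
where it is `1`. -/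
lemma chain_of_le {n : ℕ} {b : ι → Fin n → ℝ} (h12 : ∀ i c, b i c = 1 ∨ b i c = 2)
    (hle : ∀ i j, b i ≤ b j ∨ b j ≤ b i) : Chain b := by
  have key : ∀ i j c, b i ≤ b j →
      (∀ d, b j d * b i c ≤ b i d * b j c) ∨ (∀ d, b i d * b j c ≤ b j d * b i c) := by
    intro i j c h
    have hc := h c
    rcases h12 i c with h1 | h1 <;> rcases h12 j c with h2 | h2 <;> rw [h1, h2] at hc ⊢
    · exact Or.inr fun d => by linarith [h d]
    · exact Or.inl fun d => by
        rcases h12 i d with h3 | h3 <;> rcases h12 j d with h4 | h4 <;> rw [h3, h4] <;> norm_num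
    · norm_num at hc
    · exact Or.inr fun d => by linarith [h d]
  intro c i j
  rcases hle i j with h | h
  · exact key i j c h
  · exact (key j i c h).symm

section Geometry

variable {n : ℕ}

lemma orthant_add {x y : Fin n → ℝ} (hx : x ∈ orthant n) (hy : y ∈ orthant n) :
    x + y ∈ orthant n := fun i => add_nonneg (hx i) (hy i)

lemma mem_Caf {a : Fin n → ℝ} (ha : ∀ c, 0 < a c) {x : Fin n → ℝ} :
    x ∈ Caf a ↔ x ∈ orthant n ∧ 1 ≤ ∑ c, x c / a c := by
  constructor
  · intro h
    obtain ⟨y, hy, z, hz, rfl⟩ := Set.mem_add.1 h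
    have hconv : Convex ℝ {w : Fin n → ℝ | w ∈ orthant n ∧ 1 ≤ ∑ c, w c / a c} := by
      rintro u ⟨hu, hu'⟩ v ⟨hv, hv'⟩ p q hp hq hpq
      refine ⟨orthant_convex n hu hv hp hq hpq, ?_⟩
      simp only [Pi.add_apply, Pi.smul_apply, smul_eq_mul, add_div, Finset.sum_add_distrib,
        mul_div_assoc, ← Finset.mul_sum]
      nlinarith
    have hsub : (Set.range fun i : Fin n => (Pi.single i (a i) : Fin n → ℝ)) ⊆
        {w : Fin n → ℝ | w ∈ orthant n ∧ 1 ≤ ∑ c, w c / a c} := by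
      rintro _ ⟨i, rfl⟩
      have h0 : (0 : Fin n → ℝ) ≤ Pi.single i (a i) := Pi.single_nonneg.2 (ha i).le
      refine ⟨fun c => h0 c, ?_⟩
      rw [Finset.sum_eq_single i]
      · simp [(ha i).ne']
      · intro c _ hc
        simp [hc]
      · simp
    obtain ⟨h1, h2⟩ := convexHull_min hsub hconv hy
    refine ⟨orthant_add h1 hz, ?_⟩
    simp only [Pi.add_apply, add_div, Finset.sum_add_distrib]
    have : 0 ≤ ∑ c, z c / a c := Finset.sum_nonneg fun c _ => div_nonneg (hz c) (ha c).le
    linarith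
  · rintro ⟨hx, h1⟩
    set S := ∑ c, x c / a c with hS
    have hS0 : 0 < S := by linarith
    refine Set.mem_add.2 ⟨(1 / S) • x, ?_, (1 - 1 / S) • x, ?_, ?_⟩
    · have : (1 / S) • x = ∑ c, (x c / a c / S) • (Pi.single c (a c) : Fin n → ℝ) := by
        ext d
        simp only [Pi.smul_apply, smul_eq_mul, Finset.sum_apply]
        rw [Finset.sum_eq_single d]
        · have := (ha d).ne'
          simp only [Pi.single_eq_same]
          field_simp
        · intro c _ hc
          simp [Pi.single_eq_of_ne hc.symm]
        · simp
      rw [this]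
      refine (convex_convexHull ℝ _).sum_mem (fun c _ => ?_) ?_ (fun c _ => ?_)
      · exact div_nonneg (div_nonneg (hx c) (ha c).le) hS0.le
      · rw [← Finset.sum_div, ← hS, div_self hS0.ne']
      · exact subset_convexHull ℝ _ ⟨c, rfl⟩
    · intro c
      have : 1 / S ≤ 1 := (div_le_one hS0).2 h1
      exact mul_nonneg (by linarith) (hx c)
    · rw [← add_smul]; simp

/-- The transport description of a Minkowski sum: decompose `x` into points `g i ∈ C_{b i}` and set
`l i c = g i c / b i c`. -/
lemma sum_Caf {b : ι → Fin n → ℝ} (hb : ∀ i c, 0 < b i c) {I : Finset ι} (hI : I.Nonempty) :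
    ∑ i ∈ I, Caf (b i) = Reg b (ind I) := by
  ext x
  rw [Set.mem_finsetSum]
  constructor
  · rintro ⟨g, hg, rfl⟩
    have hg' : ∀ i ∈ I, g i ∈ orthant n ∧ 1 ≤ ∑ c, g i c / b i c := fun i hi =>
      (mem_Caf (hb i)).1 (hg hi)
    refine ⟨fun i c => if i ∈ I then g i c / b i c else 0, fun i c => ?_, fun i => ?_, fun c => ?_⟩
    · split_ifs with hi
      · exact div_nonneg ((hg' i hi).1 c) (hb i c).le
      · exact le_rfl
    · by_cases hi : i ∈ I
      · simpa [ind, hi] using (hg' i hi).2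
      · simp [ind, hi]
    · simp only [ite_mul, zero_mul, Finset.sum_ite_mem, Finset.univ_inter, Finset.sum_apply]
      refine Finset.sum_le_sum fun i _ => ?_
      rw [div_mul_cancel₀ _ (hb i c).ne']
  · rintro ⟨l, hl⟩
    obtain ⟨i₀, hi₀⟩ := hI
    -- The unused budget `r` is given to an arbitrary summand `i₀`.
    set r : Fin n → ℝ := fun c => x c - ∑ i ∈ I, l i c * b i c with hr
    have hr0 : ∀ c, 0 ≤ r c := by
      intro c
      have h1 := hl.cost c
      have h2 : ∑ i ∈ I, l i c * b i c ≤ ∑ i, l i c * b i c :=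
        Finset.sum_le_univ_sum_of_nonneg fun i => mul_nonneg (hl.nonneg i c) (hb i c).le
      simp only [hr]; linarith
    refine ⟨fun i c => l i c * b i c + if i = i₀ then r c else 0, fun {i} hi => ?_, ?_⟩
    · have hnn : ∀ c, 0 ≤ if i = i₀ then r c else 0 := fun c => by
        split_ifs
        exacts [hr0 c, le_rfl]
      refine (mem_Caf (hb i)).2 ⟨fun c => add_nonneg (mul_nonneg (hl.nonneg i c) (hb i c).le)
        (hnn c), ?_⟩
      have h1 := hl.total i
      simp only [ind, hi, if_true] at h1
      refine h1.trans (Finset.sum_le_sum fun c _ => ?_)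
      rw [le_div_iff₀ (hb i c)]
      linarith [hnn c]
    · ext c
      simp only [Finset.sum_apply, Finset.sum_add_distrib, Finset.sum_ite_eq', hi₀, if_true, hr]
      ring

lemma Reg_add_orthant (b : ι → Fin n → ℝ) (s : ι → ℝ) : Reg b s + orthant n = Reg b s := by
  ext x
  constructor
  · intro h
    obtain ⟨y, ⟨l, hl⟩, z, hz, rfl⟩ := Set.mem_add.1 h
    exact ⟨l, hl.nonneg, hl.total, fun c => (hl.cost c).trans (le_add_of_nonneg_right (hz c))⟩
  · exact fun h => Set.mem_add.2 ⟨x, h, 0, fun _ => le_rfl, add_zero x⟩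

lemma neg_one_pow_sub_card (I : Finset (Fin n)) :
    (-1 : ℝ) ^ (n - I.card) = (-1) ^ (n + I.card) := by
  have h : I.card ≤ n := by simpa using I.card_le_univ
  have : n + I.card = (n - I.card) + 2 * I.card := by omega
  rw [this, pow_add, pow_mul]
  simp

lemma covol_ind_empty {b : ι → Fin n → ℝ} : covol b (0 + ind ∅) = 0 := by
  have : Comp b (0 + ind ∅) = ∅ := by
    rw [Comp, Set.sdiff_eq_empty]
    exact fun x hx => ⟨0, fun _ _ => le_rfl, fun i => by simp [ind], fun c => by simpa using hx c⟩
  rw [covol, this]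
  simp

/-- The empty set, excluded in `MV`, contributes `0` to the mixed difference. -/
lemma MV_Caf {b : Fin n → Fin n → ℝ} (hb : ∀ i c, 0 < b i c) :
    MV (fun i => Caf (b i)) = Dif Finset.univ (covol b) 0 := by
  unfold MV Dif
  rw [Finset.sum_filter]
  refine Finset.sum_congr rfl fun I _ => ?_
  split_ifs with hI
  · rw [sum_Caf hb hI, neg_one_pow_sub_card, zero_add, Finset.card_univ, Fintype.card_fin]
    rfl
  · rw [Finset.not_nonempty_iff_eq_empty.1 hI, covol_ind_empty, mul_zero]

/-- If one of the polyhedra is the whole orthant, the terms for `I` and `insert i I` cancel, since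
adding the orthant does not change a sum of polyhedra; the term for `{i}` alone is `0`. -/
lemma MV_orthant {b : Fin n → Fin n → ℝ} (hb : ∀ i c, 0 < b i c) (i : Fin n) :
    MV (Function.update (fun i => Caf (b i)) i (orthant n)) = 0 := by
  unfold MV
  rw [Finset.sum_filter, ← Finset.insert_erase (Finset.mem_univ i),
    Finset.sum_powerset_insert (Finset.notMem_erase i _), ← Finset.sum_add_distrib]
  refine Finset.sum_eq_zero fun I hI => ?_
  have hiI : i ∉ I := fun h => Finset.notMem_erase i _ (Finset.mem_powerset.1 hI h)
  rw [if_pos (Finset.insert_nonempty i I), Finset.sum_insert hiI, Function.update_self]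
  have hsum : ∑ j ∈ I, Function.update (fun i => Caf (b i)) i (orthant n) j
      = ∑ j ∈ I, Caf (b j) := Finset.sum_congr rfl fun j hj => by
    have hji : j ≠ i := fun h => hiI (h ▸ hj)
    rw [Function.update_of_ne hji]
  rw [hsum]
  rcases I.eq_empty_or_nonempty with rfl | hne
  · simp
  · rw [if_pos hne, sum_Caf hb hne, add_comm (orthant n), Reg_add_orthant, neg_one_pow_sub_card,
      neg_one_pow_sub_card, Finset.card_insert_of_notMem hiI]
    ring

lemma hull_zero {a : Fin n → ℝ} (ha : ∀ c, 0 < a c) :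
    convexHull ℝ (Caf a ∪ {0}) = orthant n := by
  apply subset_antisymm
  · refine convexHull_min ?_ (orthant_convex n)
    rintro x (hx | rfl)
    · exact ((mem_Caf ha).1 hx).1
    · exact fun _ => le_rfl
  · intro x hx
    set S := ∑ c, x c / a c with hS
    have hS0 : 0 ≤ S := Finset.sum_nonneg fun c _ => div_nonneg (hx c) (ha c).le
    by_cases h1 : 1 ≤ S
    · exact subset_convexHull ℝ _ (Or.inl ((mem_Caf ha).2 ⟨hx, h1⟩))
    push Not at h1
    rcases hS0.eq_or_lt with h0 | h0
    · have : x = 0 := by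
        ext c
        have h2 := (Finset.sum_eq_zero_iff_of_nonneg
          (fun c _ => div_nonneg (hx c) (ha c).le)).1 (hS ▸ h0.symm) c (Finset.mem_univ c)
        rcases div_eq_zero_iff.1 h2 with h | h
        · exact h
        · exact absurd h (ha c).ne'
      exact subset_convexHull ℝ _ (Or.inr this)
    · have hy : (1 / S) • x ∈ Caf a := by
        refine (mem_Caf ha).2 ⟨fun c => mul_nonneg (by positivity) (hx c), ?_⟩
        simp only [Pi.smul_apply, smul_eq_mul, mul_div_assoc, ← Finset.mul_sum, ← hS]
        rw [one_div_mul_cancel h0.ne']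
      have h2 := (convex_convexHull ℝ (Caf a ∪ {0})) (subset_convexHull ℝ _ (Or.inl hy))
        (subset_convexHull ℝ _ (Or.inr rfl)) h0.le (sub_nonneg.2 h1.le) (by ring)
      have h3 : S • (1 / S) • x + (1 - S) • (0 : Fin n → ℝ) = x := by
        rw [smul_zero, add_zero, smul_smul, mul_one_div_cancel h0.ne', one_smul]
      rwa [h3] at h2

/-- Adding the lattice point `e_j` to `C_a` with `a j = 2` lowers the entry `a j` to `1`. -/
lemma hull_single {a : Fin n → ℝ} (ha : ∀ c, 0 < a c) {j : Fin n} (hj : a j = 2) :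
    convexHull ℝ (Caf a ∪ {Pi.single j 1}) = Caf (Function.update a j 1) := by
  have ha' : ∀ c, 0 < Function.update a j 1 c := by
    intro c
    by_cases h : c = j
    · subst h; simp
    · simpa [h] using ha c
  have hsum : ∀ x : Fin n → ℝ, ∑ c, x c / Function.update a j 1 c
      = ∑ c, x c / a c + x j / 2 := by
    intro x
    have : ∀ c, x c / Function.update a j 1 c = x c / a c + if c = j then x c / 2 else 0 := by
      intro c
      by_cases h : c = j
      · subst h; simp [hj]
      · simp [h]
    simp [this, Finset.sum_add_distrib]
  have hconv : Convex ℝ (Caf (Function.update a j 1)) :=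
    (convex_convexHull ℝ _).add (orthant_convex n)
  have hsj : ∑ c, (Pi.single j 1 : Fin n → ℝ) c / a c = 1 / 2 := by
    rw [Finset.sum_eq_single j]
    · simp [hj]
    · intro c _ hc
      simp [hc]
    · simp
  apply subset_antisymm
  · refine convexHull_min ?_ hconv
    rintro x (hx | rfl)
    · obtain ⟨h1, h2⟩ := (mem_Caf ha).1 hx
      refine (mem_Caf ha').2 ⟨h1, ?_⟩
      have := h1 j
      rw [hsum]; linarith
    · refine (mem_Caf ha').2 ⟨fun c => ?_, ?_⟩
      · have h0 : (0 : Fin n → ℝ) ≤ Pi.single j 1 := Pi.single_nonneg.2 zero_le_one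
        exact h0 c
      · rw [hsum, hsj]
        norm_num
  · intro x hx
    obtain ⟨h1, h2⟩ := (mem_Caf ha').1 hx
    rw [hsum] at h2
    set S := ∑ c, x c / a c with hS
    by_cases hS1 : 1 ≤ S
    · exact subset_convexHull ℝ _ (Or.inl ((mem_Caf ha).2 ⟨h1, hS1⟩))
    push Not at hS1
    have hle : x j / 2 ≤ S := by
      rw [← hj]
      exact Finset.single_le_sum (f := fun c => x c / a c)
        (fun c _ => div_nonneg (h1 c) (ha c).le) (Finset.mem_univ j)
    -- Write `x = (1 - t) • y + t • e_j` with `y` on the facet `∑ c, y c / a c = 1`: this forces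
    -- `S = (1 - t) + t / 2`, which determines `t`. The case `t = 1` means `x = e_j`.
    set t := 2 * (1 - S) with ht
    have htx : t ≤ x j := by linarith
    have hy0 : x - t • (Pi.single j 1 : Fin n → ℝ) ∈ orthant n := by
      intro c
      by_cases h : c = j
      · subst h; simpa using htx
      · simpa [h] using h1 c
    have hyS : ∑ c, (x - t • (Pi.single j 1 : Fin n → ℝ)) c / a c = 1 - t := by
      simp only [Pi.sub_apply, Pi.smul_apply, smul_eq_mul, sub_div, Finset.sum_sub_distrib,
        mul_div_assoc, ← Finset.mul_sum, hsj, ← hS]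
      rw [ht]; ring
    have ht1 : t ≤ 1 := by linarith
    rcases ht1.eq_or_lt with h | h
    · have : x - t • (Pi.single j 1 : Fin n → ℝ) = 0 := by
        ext c
        rw [h, sub_self] at hyS
        rw [h]
        rw [h] at hy0
        have h2 := (Finset.sum_eq_zero_iff_of_nonneg
          (fun c _ => div_nonneg (hy0 c) (ha c).le)).1 hyS c (Finset.mem_univ c)
        rcases div_eq_zero_iff.1 h2 with h | h
        · exact h
        · exact absurd h (ha c).ne'
      rw [h, one_smul, sub_eq_zero] at this
      exact subset_convexHull ℝ _ (Or.inr this)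
    · have h0 : 0 < 1 - t := by linarith
      have hy : (1 / (1 - t)) • (x - t • (Pi.single j 1 : Fin n → ℝ)) ∈ Caf a := by
        refine (mem_Caf ha).2 ⟨fun c => mul_nonneg (by positivity) (hy0 c), ?_⟩
        have : ∀ c, ((1 / (1 - t)) • (x - t • (Pi.single j 1 : Fin n → ℝ))) c / a c =
            (1 / (1 - t)) * ((x - t • (Pi.single j 1 : Fin n → ℝ)) c / a c) := fun c => by
          rw [Pi.smul_apply, smul_eq_mul, mul_div_assoc]
        simp only [this, ← Finset.mul_sum, hyS]
        rw [one_div_mul_cancel h0.ne']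
      have h2 := (convex_convexHull ℝ (Caf a ∪ {Pi.single j 1}))
        (subset_convexHull ℝ _ (Or.inl hy)) (subset_convexHull ℝ _ (Or.inr rfl))
        h0.le (by linarith : (0 : ℝ) ≤ t) (by ring)
      have h3 : (1 - t) • (1 / (1 - t)) • (x - t • (Pi.single j 1 : Fin n → ℝ))
          + t • (Pi.single j 1 : Fin n → ℝ) = x := by
        rw [smul_smul, mul_one_div_cancel h0.ne', one_smul, sub_add_cancel]
      rwa [h3] at h2

/-- The lattice points of the orthant outside `C_a` for `a ∈ {1, 2}^n`: every nonzero coordinate of `δ`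
contributes at least `1 / 2` to `∑ c, δ c / a c < 1`, so at most one
coordinate is nonzero; it equals `1`, and `a` is `2` there. -/
lemma lattice_points {a : Fin n → ℝ} (h12 : ∀ c, a c = 1 ∨ a c = 2) {δ : Fin n → ℝ}
    (hint : ∀ j, ∃ m : ℤ, δ j = (m : ℝ)) (hδ : δ ∈ orthant n) (hout : δ ∉ Caf a) :
    δ = 0 ∨ ∃ j, a j = 2 ∧ δ = Pi.single j 1 := by
  have ha : ∀ c, 0 < a c := fun c => by rcases h12 c with h | h <;> rw [h] <;> norm_num
  have hlt : ∑ c, δ c / a c < 1 := by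
    by_contra h
    exact hout ((mem_Caf ha).2 ⟨hδ, not_lt.1 h⟩)
  have hnn : ∀ c ∈ Finset.univ, 0 ≤ δ c / a c := fun c _ => div_nonneg (hδ c) (ha c).le
  have hone : ∀ c, δ c ≠ 0 → 1 ≤ δ c := by
    intro c hc
    obtain ⟨m, hm⟩ := hint c
    have h1 := hδ c
    rw [hm] at h1 hc ⊢
    have h2 : 0 ≤ m := by exact_mod_cast h1
    have h3 : m ≠ 0 := by exact_mod_cast hc
    have h4 : 1 ≤ m := by omega
    exact_mod_cast h4
  by_cases h0 : δ = 0
  · exact Or.inl h0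
  right
  obtain ⟨j, hj⟩ := Function.ne_iff.1 h0
  have h1 := hone j hj
  have h2 := Finset.single_le_sum hnn (Finset.mem_univ j)
  have haj : a j = 2 := by
    rcases h12 j with h | h
    · rw [h, div_one] at h2; linarith
    · exact h
  refine ⟨j, haj, ?_⟩
  ext c
  by_cases hc : c = j
  · subst hc
    rw [Pi.single_eq_same]
    obtain ⟨m, hm⟩ := hint c
    rw [haj] at h2
    rw [hm] at h1 h2 ⊢
    have h3 : (m : ℝ) < 2 := by linarith
    have h4 : m < 2 := by exact_mod_cast h3
    have h5 : 1 ≤ m := by exact_mod_cast h1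
    have : m = 1 := by omega
    simp [this]
  · rw [Pi.single_eq_of_ne hc]
    by_contra hne
    have h3 := hone c hne
    have h4 := Finset.add_le_sum hnn (Finset.mem_univ c) (Finset.mem_univ j) hc
    have h5 : ∀ d, 1 ≤ δ d → 1 / 2 ≤ δ d / a d := by
      intro d hd
      rcases h12 d with h | h <;> rw [h] <;> linarith
    have := h5 c h3
    have := h5 j h1
    linarith

end Geometry

/-! ### The minimal tuples of mixed volume two -/

theorem stmt_5 {n : ℕ} (hn : 1 ≤ n) (k : ℕ) (hk1 : 1 ≤ k) (hkn : k ≤ n)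
    (B : Fin n → Set (Fin n → ℝ))
    (hB : ∀ i : Fin n, B i =
      if (i : ℕ) < k then Caf (fun j => if (j : ℕ) < k - 1 then (1 : ℝ) else 2)
      else Caf (fun _ => (1 : ℝ))) :
    IsMinimalTuple B 2 := by
  set a : Fin n → ℝ := fun j => if (j : ℕ) < k - 1 then 1 else 2 with ha
  set b : Fin n → Fin n → ℝ := fun i => if (i : ℕ) < k then a else fun _ => 1 with hb
  have hBb : B = fun i => Caf (b i) := by
    ext1 i
    rw [hB]
    simp only [hb]
    split_ifs <;> rfl
  have ha12 : ∀ c, a c = 1 ∨ a c = 2 := fun c => by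
    simp only [ha]; split_ifs <;> simp
  have h12 : ∀ i c, b i c = 1 ∨ b i c = 2 := fun i c => by
    simp only [hb]
    split_ifs
    · exact ha12 c
    · simp
  have ha1 : ∀ c, 1 ≤ a c := fun c => by rcases ha12 c with h | h <;> rw [h] <;> norm_num
  have hpos : ∀ i c, 0 < b i c := fun i c => by
    rcases h12 i c with h | h <;> rw [h] <;> norm_num
  have hchain : Chain b := by
    refine chain_of_le h12 fun i j => ?_
    simp only [hb]
    split_ifs
    · exact Or.inl le_rfl
    · exact Or.inr ha1
    · exact Or.inl ha1
    · exact Or.inl le_rfl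
  set A : Finset (Fin n) := Finset.univ.filter fun i => (i : ℕ) < k with hA
  set O : Finset (Fin n) := Finset.univ.filter fun i => ¬ (i : ℕ) < k with hO
  have hAO : Disjoint A O := Finset.disjoint_filter_filter_not _ _ _
  have hun : A ∪ O = Finset.univ := Finset.filter_union_filter_not_eq _ _
  have hAc : A.card = k := by
    rw [hA, Fin.card_filter_val_lt]
    exact min_eq_right hkn
  have hcard : A.card + O.card = n := by
    rw [← Finset.card_union_of_disjoint hAO, hun, Finset.card_univ, Fintype.card_fin]
  have hbA : ∀ i ∈ A, b i = a := fun i hi => if_pos (Finset.mem_filter.1 hi).2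
  have hbO : ∀ i ∈ O, b i = fun _ => 1 := fun i hi => if_neg (Finset.mem_filter.1 hi).2
  refine ⟨?_, fun i δ hint hδ hout => ?_⟩
  · rw [hBb, MV_Caf hpos, ← hun]
    refine HasDif.two hpos hchain hAO (p := k - 1) (fun i hi c => by rw [hbA i hi])
      (fun i hi c => by rw [hbO i hi]) (by omega) (by omega) 0 (fun _ => le_rfl) (fun _ _ => rfl)
      (by omega)
  · rw [hBb] at hout ⊢
    rcases lattice_points (h12 i) hint hδ hout with rfl | ⟨j, hj, rfl⟩
    · rw [hull_zero (hpos i), MV_orthant hpos]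
      norm_num
    · have hiA : i ∈ A := by
        by_contra h
        have hiO : i ∈ O := by
          have := Finset.mem_univ i
          rw [← hun] at this
          exact (Finset.mem_union.1 this).resolve_left h
        rw [hbO i hiO] at hj
        norm_num at hj
      have hjk : k - 1 ≤ (j : ℕ) := by
        rw [hbA i hiA] at hj
        by_contra h
        simp only [ha, if_pos (not_le.1 h)] at hj
        norm_num at hj
      rw [hull_single (hpos i) hj]
      -- `b'` is the family in which the entry `j` of the `i`-th vector is lowered to `1`.
      set b' := Function.update b i (Function.update (b i) j 1) with hb'
      have hupd : Function.update (fun i => Caf (b i)) i (Caf (Function.update (b i) j 1))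
          = fun i => Caf (b' i) := by
        ext1 i'
        by_cases h : i' = i
        · subst h; simp [hb']
        · simp [hb', h]
      have hbi : ∀ c, b' i c = if (c : ℕ) < k - 1 ∨ (c : ℕ) = j then 1 else 2 := by
        intro c
        simp only [hb', Function.update_self]
        by_cases h : c = j
        · subst h; simp
        · have h' : (c : ℕ) ≠ j := fun e => h (Fin.ext e)
          rw [Function.update_of_ne h, hbA i hiA]
          simp [ha, h']
      have hbne : ∀ i', i' ≠ i → b' i' = b i' := fun i' h => by simp [hb', h]
      have h12' : ∀ i c, b' i c = 1 ∨ b' i c = 2 := by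
        intro i' c
        by_cases h : i' = i
        · subst h
          rw [hbi]
          split_ifs <;> simp
        · rw [hbne i' h]; exact h12 i' c
      have hpos' : ∀ i c, 0 < b' i c := fun i c => by
        rcases h12' i c with h | h <;> rw [h] <;> norm_num
      have hb'1 : ∀ i c, 1 ≤ b' i c := fun i c => by
        rcases h12' i c with h | h <;> rw [h] <;> norm_num
      have hb'a : ∀ i', b' i' ≤ a := by
        intro i' c
        by_cases h : i' = i
        · subst h
          rw [hbi]
          simp only [ha]
          split_ifs <;> first | omega | norm_num
        · rw [hbne i' h]
          simp only [hb]
          split_ifs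
          exacts [le_rfl, ha1 c]
      have hb'cases : ∀ i', i' ≠ i → b' i' = a ∨ b' i' = fun _ => 1 := by
        intro i' h
        rw [hbne i' h]
        simp only [hb]
        split_ifs
        exacts [Or.inl rfl, Or.inr rfl]
      have hchain' : Chain b' := by
        refine chain_of_le h12' fun i₁ i₂ => ?_
        by_cases h₁ : i₁ = i
        · by_cases h₂ : i₂ = i
          · rw [h₁, h₂]; exact Or.inl le_rfl
          · rcases hb'cases i₂ h₂ with h | h <;> rw [h]
            exacts [Or.inl (hb'a _), Or.inr (hb'1 _)]
        · rcases hb'cases i₁ h₁ with h | h <;> rw [h]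
          exacts [Or.inr (hb'a _), Or.inl (hb'1 _)]
      have hiO : i ∉ O := Finset.disjoint_left.1 hAO hiA
      have hun' : insert i (A.erase i ∪ O) = Finset.univ := by
        rw [← Finset.insert_union, Finset.insert_erase hiA, hun]
      have hone : HasDif b' (insert i (A.erase i ∪ O)) 1 := by
        refine HasDif.drop hpos' hchain' (hAO.mono_left (Finset.erase_subset _ _)) (p := k - 1)
          (m := j) ?_ hbi hjk j.2 (fun i' hi' c => ?_) (fun i' hi' c => ?_) ?_ (by omega)
        · simp [hiO]
        · rw [hbne i' (Finset.ne_of_mem_erase hi'), hbA i' (Finset.mem_of_mem_erase hi')]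
        · rw [hbne i' (fun h => hiO (h ▸ hi')), hbO i' hi']
        · rw [Finset.card_erase_of_mem hiA, hAc]
      rw [hupd, MV_Caf hpos', ← hun',
        hone 0 (fun _ => le_rfl) (fun _ _ => rfl) (by omega)]
      norm_num
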